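/- Set P = (Y_{t₁,t₂}∘L_{t₁,t₂})⊗I_{t₃}, P' = (Y'_{t₁,t₂}∘L'_{t₁,t₂})⊗I_{t₃}, Q = I_{t₁}⊗(Y_{t₂,t₃}∘L_{t₂,t₃}) and Q' = I_{t₁}⊗(Y'_{t₂,t₃}∘L'_{t₂,t₃}), all linear endomorphisms of V_{t₁}⊗V_{t₂}⊗V_{t₃}. Then, writing [A,B] = AB − BA: [P,Q] = [P',Q'] = [Q',P] = [Q,P'] = ((−1)^{σ₂}·λ₁·κ/(λ₁+λ₂))·(Y_{t₁,t₂}⊗I_{t₃})∘Y'_{t₄,t₃}∘L_{t₇,t₃}∘(L'_{t₁,t₂}⊗I_{t₃}) − ((−1)^{σ₂}·λ₃/(λ₂+λ₃))·(Y'_{t₁,t₂}⊗I_{t₃})∘Y_{t₇,t₃}∘L'_{t₄,t₃}∘(L_{t₁,t₂}⊗I_{t₃}). -/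

import Mathlib

set_option linter.unusedVariables false

open TensorProduct

noncomputable section

/-- a triple t = (λ, μ, σ) ∈ ℚ × ℚ × ℤ/2 -/
structure Triple where
  lam : ℚ
  mu : ℚ
  sg : ZMod 2

instance : Add Triple := ⟨fun a b => ⟨a.lam + b.lam, a.mu + b.mu, a.sg + b.sg⟩⟩
instance : Neg Triple := ⟨fun a => ⟨-a.lam, -a.mu, -a.sg⟩⟩
instance : Sub Triple := ⟨fun a b => a + -b⟩

def e₂ : Triple := ⟨0, 1, 0⟩
def e₃ : Triple := ⟨0, 0, 1⟩
/-- t* = (−λ, −μ, σ+1) -/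
def Triple.star (t : Triple) : Triple := ⟨-t.lam, -t.mu, t.sg + 1⟩

/-- the underlying space of every V_t: basis v = (1,0) (degree σ), w = (0,1) (degree σ+1) -/
abbrev V : Type := ℚ × ℚ
abbrev VV : Type := V ⊗[ℚ] V
abbrev VVV : Type := V ⊗[ℚ] VV

def vv : V := (1, 0)
def ww : V := (0, 1)

/-- (−1)^σ -/
def sgn (s : ZMod 2) : ℚ := if s = 0 then 1 else -1

/-- H: v ↦ (μ+1)v, w ↦ (μ−1)w -/
def opH (t : Triple) : V →ₗ[ℚ] V :=
  LinearMap.prodMap ((t.mu + 1) • LinearMap.id) ((t.mu - 1) • LinearMap.id)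
/-- D: multiplication by λ -/
def opD (t : Triple) : V →ₗ[ℚ] V := t.lam • LinearMap.id
/-- E: v ↦ 0, w ↦ λv -/
def opE (t : Triple) : V →ₗ[ℚ] V := (LinearMap.inl ℚ ℚ ℚ) ∘ₗ (t.lam • LinearMap.snd ℚ ℚ ℚ)
/-- F: v ↦ w, w ↦ 0 -/
def opF (t : Triple) : V →ₗ[ℚ] V := (LinearMap.inr ℚ ℚ ℚ) ∘ₗ (LinearMap.fst ℚ ℚ ℚ)
/-- the parity operator x ↦ (−1)^{deg x} x on V_t -/
def opJ (t : Triple) : V →ₗ[ℚ] V :=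
  LinearMap.prodMap (sgn t.sg • LinearMap.id) ((- sgn t.sg) • LinearMap.id)

/-- the four generators H, D, E, F of gl(1|1) -/
inductive Gen | H | D | E | F

/-- H and D have degree 0; E and F have degree 1 -/
def Gen.isEven : Gen → Bool
  | .H => true | .D => true | .E => false | .F => false

def op : Gen → Triple → V →ₗ[ℚ] V
  | .H, t => opH t
  | .D, t => opD t
  | .E, t => opE t
  | .F, t => opF t

/-- the super-Leibniz action X·(x⊗y) = (X·x)⊗y + (−1)^{deg X·deg x}·x⊗(X·y)
on V_{t₁}⊗V_{t₂} (the sign being implemented by the parity operator) -/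
def op2 (g : Gen) (t₁ t₂ : Triple) : VV →ₗ[ℚ] VV :=
  TensorProduct.map (op g t₁) LinearMap.id +
  TensorProduct.map (if g.isEven then LinearMap.id else opJ t₁) (op g t₂)

/-- the linear map ℚ×ℚ → M sending (1,0) ↦ p and (0,1) ↦ q -/
def bmap {M : Type*} [AddCommGroup M] [Module ℚ M] (p q : M) : V →ₗ[ℚ] M :=
  LinearMap.coprod (LinearMap.toSpanSingleton ℚ M p) (LinearMap.toSpanSingleton ℚ M q)

/-- Y_{t₁,t₂} : V_{t₁+t₂+e₂} → V_{t₁}⊗V_{t₂} -/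
def Ymap (t₁ t₂ : Triple) : V →ₗ[ℚ] VV :=
  bmap (vv ⊗ₜ[ℚ] vv) (ww ⊗ₜ[ℚ] vv + sgn t₁.sg • (vv ⊗ₜ[ℚ] ww))

/-- Y'_{t₁,t₂} : V_{t₁+t₂−e₂+e₃} → V_{t₁}⊗V_{t₂} -/
def Y'map (t₁ t₂ : Triple) : V →ₗ[ℚ] VV :=
  bmap ((t₁.lam + t₂.lam)⁻¹ •
      (t₁.lam • (vv ⊗ₜ[ℚ] ww) - (sgn t₁.sg * t₂.lam) • (ww ⊗ₜ[ℚ] vv)))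
    (ww ⊗ₜ[ℚ] ww)

/-- L_{t₁,t₂} : V_{t₁}⊗V_{t₂} → V_{t₁+t₂+e₂} -/
def Lmap (t₁ t₂ : Triple) : VV →ₗ[ℚ] V :=
  TensorProduct.lift (LinearMap.mk₂ ℚ
    (fun x y => ((x.1 * y.1 : ℚ),
      (t₁.lam / (t₁.lam + t₂.lam)) * (x.2 * y.1)
        + (sgn t₁.sg * t₂.lam / (t₁.lam + t₂.lam)) * (x.1 * y.2)))
    (by intro x x' y; apply Prod.ext <;> simp <;> ring)
    (by intro a x y; apply Prod.ext <;> simp [smul_eq_mul] <;> ring)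
    (by intro x y y'; apply Prod.ext <;> simp <;> ring)
    (by intro a x y; apply Prod.ext <;> simp [smul_eq_mul] <;> ring))

/-- L'_{t₁,t₂} : V_{t₁}⊗V_{t₂} → V_{t₁+t₂−e₂+e₃} -/
def L'map (t₁ t₂ : Triple) : VV →ₗ[ℚ] V :=
  TensorProduct.lift (LinearMap.mk₂ ℚ
    (fun x y => ((x.1 * y.2 - sgn t₁.sg * (x.2 * y.1) : ℚ), (x.2 * y.2 : ℚ)))
    (by intro x x' y; apply Prod.ext <;> simp <;> ring)
    (by intro a x y; apply Prod.ext <;> simp [smul_eq_mul] <;> ring)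
    (by intro x y y'; apply Prod.ext <;> simp <;> ring)
    (by intro a x y; apply Prod.ext <;> simp [smul_eq_mul] <;> ring))

/-- ∩_t : V_{t*}⊗V_t → ℚ -/
def capMap (t : Triple) : VV →ₗ[ℚ] ℚ :=
  TensorProduct.lift (LinearMap.mk₂ ℚ
    (fun x y => (x.1 * y.2 + sgn t.sg * (x.2 * y.1) : ℚ))
    (by intro x x' y; simp; ring)
    (by intro a x y; simp [smul_eq_mul]; ring)
    (by intro x y y'; simp; ring)
    (by intro a x y; simp [smul_eq_mul]; ring))

/-- ∪_t : ℚ → V_{t*}⊗V_t -/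
def cupMap (t : Triple) : ℚ →ₗ[ℚ] VV :=
  LinearMap.toSpanSingleton ℚ VV (ww ⊗ₜ[ℚ] vv - sgn t.sg • (vv ⊗ₜ[ℚ] ww))


/-- t₄ = t₁+t₂+e₂ -/
def T4 (t₁ t₂ : Triple) : Triple := t₁ + t₂ + e₂
/-- t₅ = t₄+t₃+e₂ -/
def T5 (t₁ t₂ t₃ : Triple) : Triple := T4 t₁ t₂ + t₃ + e₂
/-- t₆ = t₂+t₃+e₂ -/
def T6 (t₂ t₃ : Triple) : Triple := t₂ + t₃ + e₂
/-- t₇ = t₄−2e₂+e₃ -/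
def T7 (t₁ t₂ : Triple) : Triple := T4 t₁ t₂ - e₂ - e₂ + e₃
/-- t₈ = t₅−2e₂+e₃ -/
def T8 (t₁ t₂ t₃ : Triple) : Triple := T5 t₁ t₂ t₃ - e₂ - e₂ + e₃
/-- t₉ = t₆−2e₂+e₃ -/
def T9 (t₂ t₃ : Triple) : Triple := T6 t₂ t₃ - e₂ - e₂ + e₃
/-- κ = λ₂(λ₁+λ₂+λ₃)/((λ₁+λ₂)(λ₂+λ₃)) -/
def kap (t₁ t₂ t₃ : Triple) : ℚ :=
  t₂.lam * (t₁.lam + t₂.lam + t₃.lam) / ((t₁.lam + t₂.lam) * (t₂.lam + t₃.lam))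

/-- f⊗I as an endomorphism of V₁⊗(V₂⊗V₃), via the associator -/
def endo12 (f : VV →ₗ[ℚ] VV) : VVV →ₗ[ℚ] VVV :=
  (TensorProduct.assoc ℚ V V V).toLinearMap
    ∘ₗ TensorProduct.map f LinearMap.id
    ∘ₗ (TensorProduct.assoc ℚ V V V).symm.toLinearMap

/-- the commutator [A,B] = A∘B − B∘A (written additively) -/
def lcomm (A B : VVV →ₗ[ℚ] VVV) : VVV →ₗ[ℚ] VVV :=
  A ∘ₗ B + (-1 : ℚ) • (B ∘ₗ A)

theorem sgn_add (a b : ZMod 2) : sgn (a + b) = sgn a * sgn b := by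
  have h : ∀ x : ZMod 2, x = 0 ∨ x = 1 := by decide
  have h2 : (1 + 1 : ZMod 2) = 0 := by decide
  rcases h a with rfl | rfl <;> rcases h b with rfl | rfl <;> simp [sgn, h2]

theorem sgn_sq (a : ZMod 2) : sgn a * sgn a = 1 := by
  unfold sgn; split_ifs <;> norm_num

theorem T4_lam (a b : Triple) : (T4 a b).lam = a.lam + b.lam := by
  change a.lam + b.lam + 0 = _; ring

theorem T7_lam (a b : Triple) : (T7 a b).lam = a.lam + b.lam := by
  change a.lam + b.lam + 0 + -0 + -0 + 0 = _; ring

theorem T4_sgn (a b : Triple) : sgn (T4 a b).sg = sgn a.sg * sgn b.sg := by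
  change sgn (a.sg + b.sg + 0) = _; rw [add_zero, sgn_add]

theorem T7_sgn (a b : Triple) : sgn (T7 a b).sg = - (sgn a.sg * sgn b.sg) := by
  change sgn (a.sg + b.sg + 0 + -0 + -0 + 1) = _
  simp only [neg_zero, add_zero]
  rw [sgn_add, sgn_add]; simp [sgn]

theorem bmap_vv {M : Type*} [AddCommGroup M] [Module ℚ M] (p q : M) : bmap p q vv = p := by
  simp [bmap, vv]
theorem bmap_ww {M : Type*} [AddCommGroup M] [Module ℚ M] (p q : M) : bmap p q ww = q := by
  simp [bmap, ww]

theorem Y_vv (a b : Triple) : Ymap a b vv = vv ⊗ₜ[ℚ] vv := bmap_vv _ _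
theorem Y_ww (a b : Triple) :
    Ymap a b ww = ww ⊗ₜ[ℚ] vv + sgn a.sg • (vv ⊗ₜ[ℚ] ww) := bmap_ww _ _
theorem Y'_vv (a b : Triple) : Y'map a b vv = (a.lam + b.lam)⁻¹ •
      (a.lam • (vv ⊗ₜ[ℚ] ww) - (sgn a.sg * b.lam) • (ww ⊗ₜ[ℚ] vv)) := bmap_vv _ _
theorem Y'_ww (a b : Triple) : Y'map a b ww = ww ⊗ₜ[ℚ] ww := bmap_ww _ _

theorem L_vv (a b : Triple) : Lmap a b (vv ⊗ₜ[ℚ] vv) = vv := by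
  simp [Lmap, vv]
theorem L_wv (a b : Triple) :
    Lmap a b (ww ⊗ₜ[ℚ] vv) = (a.lam / (a.lam + b.lam)) • ww := by
  simp [Lmap, vv, ww]
theorem L_vw (a b : Triple) :
    Lmap a b (vv ⊗ₜ[ℚ] ww) = (sgn a.sg * b.lam / (a.lam + b.lam)) • ww := by
  simp [Lmap, vv, ww]
theorem L_ww (a b : Triple) : Lmap a b (ww ⊗ₜ[ℚ] ww) = 0 := by
  simp [Lmap, ww]

theorem L'_vv (a b : Triple) : L'map a b (vv ⊗ₜ[ℚ] vv) = 0 := by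
  simp [L'map, vv]
theorem L'_wv (a b : Triple) : L'map a b (ww ⊗ₜ[ℚ] vv) = (-sgn a.sg) • vv := by
  simp [L'map, vv, ww]
theorem L'_vw (a b : Triple) : L'map a b (vv ⊗ₜ[ℚ] ww) = vv := by
  simp [L'map, vv, ww]
theorem L'_ww (a b : Triple) : L'map a b (ww ⊗ₜ[ℚ] ww) = ww := by
  simp [L'map, ww]

theorem V_ext {M : Type*} [AddCommGroup M] [Module ℚ M] {f g : V →ₗ[ℚ] M}
    (h1 : f vv = g vv) (h2 : f ww = g ww) : f = g := by
  apply LinearMap.prod_ext <;> ext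
  · simpa [vv] using h1
  · simpa [ww] using h2

theorem VV_ext {M : Type*} [AddCommGroup M] [Module ℚ M] {f g : VV →ₗ[ℚ] M}
    (h1 : f (vv ⊗ₜ vv) = g (vv ⊗ₜ vv)) (h2 : f (vv ⊗ₜ ww) = g (vv ⊗ₜ ww))
    (h3 : f (ww ⊗ₜ vv) = g (ww ⊗ₜ vv)) (h4 : f (ww ⊗ₜ ww) = g (ww ⊗ₜ ww)) : f = g := by
  apply TensorProduct.ext
  apply V_ext <;> apply V_ext <;> assumption

theorem VVV_ext {M : Type*} [AddCommGroup M] [Module ℚ M] {f g : VVV →ₗ[ℚ] M}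
    (h : ∀ x y z, (x = vv ∨ x = ww) → (y = vv ∨ y = ww) → (z = vv ∨ z = ww) →
      f (x ⊗ₜ (y ⊗ₜ z)) = g (x ⊗ₜ (y ⊗ₜ z))) : f = g := by
  apply TensorProduct.ext
  apply V_ext <;> apply VV_ext <;> apply h <;> simp

theorem YL_add (a b : Triple) (h : a.lam + b.lam ≠ 0) :
    Y'map a b ∘ₗ L'map a b = LinearMap.id - Ymap a b ∘ₗ Lmap a b := by
  have hs := sgn_sq a.sg
  apply VV_ext <;>
    simp only [LinearMap.sub_apply, LinearMap.comp_apply, LinearMap.id_apply, L_vv, L_vw, L_wv,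
      L_ww, L'_vv, L'_vw, L'_wv, L'_ww, Y_vv, Y_ww, Y'_vv, Y'_ww, map_smul, map_zero] <;>
    match_scalars <;> (try field_simp) <;> grind

theorem PQ (t₁ t₂ t₃ : Triple)
    (h₁₂ : t₁.lam + t₂.lam ≠ 0) (h₂₃ : t₂.lam + t₃.lam ≠ 0)
    (h₁₂₃ : t₁.lam + t₂.lam + t₃.lam ≠ 0) :
    lcomm (endo12 (Ymap t₁ t₂ ∘ₗ Lmap t₁ t₂))
      (TensorProduct.map LinearMap.id (Ymap t₂ t₃ ∘ₗ Lmap t₂ t₃)) =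
      (sgn t₂.sg * t₁.lam * kap t₁ t₂ t₃ / (t₁.lam + t₂.lam)) •
        ((TensorProduct.assoc ℚ V V V).toLinearMap
          ∘ₗ TensorProduct.map (Ymap t₁ t₂) LinearMap.id
          ∘ₗ Y'map (T4 t₁ t₂) t₃ ∘ₗ Lmap (T7 t₁ t₂) t₃
          ∘ₗ TensorProduct.map (L'map t₁ t₂) LinearMap.id
          ∘ₗ (TensorProduct.assoc ℚ V V V).symm.toLinearMap)
      + (-(sgn t₂.sg * t₃.lam / (t₂.lam + t₃.lam))) •
        ((TensorProduct.assoc ℚ V V V).toLinearMap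
          ∘ₗ TensorProduct.map (Y'map t₁ t₂) LinearMap.id
          ∘ₗ Ymap (T7 t₁ t₂) t₃ ∘ₗ L'map (T4 t₁ t₂) t₃
          ∘ₗ TensorProduct.map (Lmap t₁ t₂) LinearMap.id
          ∘ₗ (TensorProduct.assoc ℚ V V V).symm.toLinearMap) := by
  have hs1 := sgn_sq t₁.sg
  have hs2 := sgn_sq t₂.sg
  apply VVV_ext
  rintro x y z (rfl | rfl) (rfl | rfl) (rfl | rfl) <;>
    simp only [lcomm, endo12, kap, LinearMap.add_apply, LinearMap.smul_apply, LinearMap.sub_apply,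
      LinearMap.comp_apply, LinearMap.id_apply, LinearEquiv.coe_coe, TensorProduct.assoc_tmul,
      TensorProduct.assoc_symm_tmul, TensorProduct.map_tmul, L_vv, L_vw, L_wv,
      L_ww, L'_vv, L'_vw, L'_wv, L'_ww, Y_vv, Y_ww, Y'_vv, Y'_ww, map_smul, map_zero, map_add,
      map_sub, TensorProduct.tmul_add, TensorProduct.add_tmul, TensorProduct.tmul_sub,
      TensorProduct.sub_tmul, TensorProduct.tmul_smul, ← TensorProduct.smul_tmul',
      TensorProduct.zero_tmul, TensorProduct.tmul_zero, T4_lam, T7_lam, T4_sgn, T7_sgn,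
      smul_zero, add_zero, zero_add] <;>
    match_scalars <;> (try field_simp) <;> grind

theorem endo12_sub (f : VV →ₗ[ℚ] VV) : endo12 (LinearMap.id - f) = LinearMap.id - endo12 f := by
  apply VVV_ext
  intro x y z _ _ _
  simp [endo12, TensorProduct.sub_tmul]

theorem map_id_sub (f : VV →ₗ[ℚ] VV) : (TensorProduct.map LinearMap.id (LinearMap.id - f) :
    VVV →ₗ[ℚ] VVV) = LinearMap.id - TensorProduct.map LinearMap.id f := by
  apply VVV_ext
  intro x y z _ _ _
  simp [TensorProduct.tmul_sub]

/-- Lemma 28: the four commutators coincide. -/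
theorem stmt16 (t₁ t₂ t₃ : Triple)
    (h₁ : t₁.lam ≠ 0) (h₂ : t₂.lam ≠ 0) (h₃ : t₃.lam ≠ 0)
    (h₁₂ : t₁.lam + t₂.lam ≠ 0) (h₂₃ : t₂.lam + t₃.lam ≠ 0)
    (h₁₂₃ : t₁.lam + t₂.lam + t₃.lam ≠ 0) :
    let P : VVV →ₗ[ℚ] VVV := endo12 (Ymap t₁ t₂ ∘ₗ Lmap t₁ t₂)
    let P' : VVV →ₗ[ℚ] VVV := endo12 (Y'map t₁ t₂ ∘ₗ L'map t₁ t₂)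
    let Q : VVV →ₗ[ℚ] VVV := TensorProduct.map LinearMap.id (Ymap t₂ t₃ ∘ₗ Lmap t₂ t₃)
    let Q' : VVV →ₗ[ℚ] VVV := TensorProduct.map LinearMap.id (Y'map t₂ t₃ ∘ₗ L'map t₂ t₃)
    let R : VVV →ₗ[ℚ] VVV :=
      (sgn t₂.sg * t₁.lam * kap t₁ t₂ t₃ / (t₁.lam + t₂.lam)) •
        ((TensorProduct.assoc ℚ V V V).toLinearMap
          ∘ₗ TensorProduct.map (Ymap t₁ t₂) LinearMap.id
          ∘ₗ Y'map (T4 t₁ t₂) t₃ ∘ₗ Lmap (T7 t₁ t₂) t₃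
          ∘ₗ TensorProduct.map (L'map t₁ t₂) LinearMap.id
          ∘ₗ (TensorProduct.assoc ℚ V V V).symm.toLinearMap)
      + (-(sgn t₂.sg * t₃.lam / (t₂.lam + t₃.lam))) •
        ((TensorProduct.assoc ℚ V V V).toLinearMap
          ∘ₗ TensorProduct.map (Y'map t₁ t₂) LinearMap.id
          ∘ₗ Ymap (T7 t₁ t₂) t₃ ∘ₗ L'map (T4 t₁ t₂) t₃
          ∘ₗ TensorProduct.map (Lmap t₁ t₂) LinearMap.id
          ∘ₗ (TensorProduct.assoc ℚ V V V).symm.toLinearMap)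
    lcomm P Q = R ∧ lcomm P' Q' = R ∧ lcomm Q' P = R ∧ lcomm Q P' = R := by
  intro P P' Q Q' R
  have h : lcomm P Q = R := PQ t₁ t₂ t₃ h₁₂ h₂₃ h₁₂₃
  have hP : P' = LinearMap.id - P := by
    simp only [P', P]; rw [YL_add t₁ t₂ h₁₂, endo12_sub]
  have hQ : Q' = LinearMap.id - Q := by
    simp only [Q', Q]; rw [YL_add t₂ t₃ h₂₃, map_id_sub]
  rw [hP, hQ, ← h]
  clear_value P Q
  refine ⟨rfl, ?_, ?_, ?_⟩ <;>
    simp only [lcomm, LinearMap.sub_comp, LinearMap.comp_sub, LinearMap.id_comp,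
      LinearMap.comp_id] <;> module
end
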